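/- Suppose the comparison graph G is connected. Then 2𝔡 is an eigenvalue of the Laplacian matrix L if and only if G is regular bipartite (Lemma 4.2, equality part). -/

import Mathlib

/-!
An eigenvector `v` for `2𝔡` satisfies `∑ j, M i j * (v i + v j) = 2 * (d i - 𝔡) * v i`. At a
vertex `i` where `|v|` is maximal, multiplying by `v i` makes every summand on the left
nonnegative while the right-hand side is nonpositive. Hence everything vanishes: `d i = 𝔡`, and
`v j = -v i` for each neighbour `j` of `i`, so `|v|` is maximal at `j` as well
(`eigenvector_at_max`). By connectedness this holds at every vertex, so the graph is regular and
the sign of `v` is a 2-colouring. Conversely, for a regular bipartite graph the `±1` vector given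
by the 2-colouring is an eigenvector for `2𝔡`.
-/

open Matrix Finset

lemma laplacian_mulVec_apply {n : ℕ} {M L : Matrix (Fin n) (Fin n) ℝ} {d : Fin n → ℝ}
    (hMdiag : ∀ i, M i i = 0) (hL : ∀ i j, L i j = if i = j then d i else -M i j)
    (v : Fin n → ℝ) (i : Fin n) :
    (L *ᵥ v) i = d i * v i - ∑ j, M i j * v j := by
  have h : ∀ j, L i j * v j = (if i = j then d i * v j else 0) - M i j * v j := by
    intro j
    rw [hL]
    split_ifs with hij
    · subst hij
      simp [hMdiag]
    · ring
  simp [Matrix.mulVec, dotProduct, h, Finset.sum_sub_distrib]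

/-- The local rigidity step: where an eigenvector for `2𝔡` has maximal absolute value, the degree
is `𝔡` and the eigenvector flips its sign along every edge. -/
lemma eigenvector_at_max {n : ℕ} {M : Matrix (Fin n) (Fin n) ℝ} {d v : Fin n → ℝ} {𝔡 : ℝ}
    (hMnonneg : ∀ i j, 0 ≤ M i j) (hd : ∀ i, d i = ∑ j, M i j) (hle : ∀ i, d i ≤ 𝔡)
    (hv : ∀ i, d i * v i - ∑ j, M i j * v j = 2 * 𝔡 * v i)
    (i : Fin n) (hi : v i ≠ 0) (hmax : ∀ j, |v j| ≤ |v i|) :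
    d i = 𝔡 ∧ ∀ j, M i j ≠ 0 → v j = -v i := by
  have hpos : 0 < v i ^ 2 := by positivity
  have hterm : ∀ j, 0 ≤ M i j * (v i ^ 2 + v i * v j) := by
    intro j
    refine mul_nonneg (hMnonneg i j) ?_
    have h1 : |v i * v j| ≤ v i ^ 2 := by
      rw [abs_mul, ← sq_abs, sq]
      exact mul_le_mul_of_nonneg_left (hmax j) (abs_nonneg _)
    linarith [neg_abs_le (v i * v j)]
  have hsum : ∑ j, M i j * (v i ^ 2 + v i * v j) = 2 * (d i - 𝔡) * v i ^ 2 := by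
    have h1 : ∑ j, M i j * (v i ^ 2 + v i * v j)
        = (∑ j, M i j) * v i ^ 2 + v i * ∑ j, M i j * v j := by
      rw [Finset.sum_mul, Finset.mul_sum, ← Finset.sum_add_distrib]
      exact Finset.sum_congr rfl fun j _ => by ring
    rw [h1, ← hd]
    linear_combination -(v i) * hv i
  have hnn : 0 ≤ ∑ j, M i j * (v i ^ 2 + v i * v j) := Finset.sum_nonneg fun j _ => hterm j
  have hdi : d i = 𝔡 := by
    refine le_antisymm (hle i) ?_
    rw [hsum] at hnn
    linarith [nonneg_of_mul_nonneg_left hnn hpos]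
  refine ⟨hdi, fun j hj => ?_⟩
  have h0 : ∑ j, M i j * (v i ^ 2 + v i * v j) = 0 := by rw [hsum, hdi]; ring
  have hz := (Finset.sum_eq_zero_iff_of_nonneg fun j _ => hterm j).1 h0 j (Finset.mem_univ j)
  have hz' : v i * (v i + v j) = 0 := by
    linear_combination (mul_eq_zero.1 hz).resolve_left hj
  linarith [(mul_eq_zero.1 hz').resolve_left hi]

/-- Lemma 4.2 (equality part): for a connected comparison graph, `2𝔡` is a Laplacian
eigenvalue iff the graph is regular bipartite. -/
theorem laplacian_eigenvalue_two_d_iff_regular_bipartite (n : ℕ) (hn : 2 ≤ n)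
    (M : Matrix (Fin n) (Fin n) ℝ)
    (hMsymm : ∀ i j, M j i = M i j)
    (hMnonneg : ∀ i j, 0 ≤ M i j)
    (hMdiag : ∀ i, M i i = 0)
    (d : Fin n → ℝ) (hd : ∀ i, d i = ∑ j, M i j)
    (𝔡 : ℝ) (h𝔡 : IsGreatest (Set.range d) 𝔡)
    (L : Matrix (Fin n) (Fin n) ℝ)
    (hL : ∀ i j, L i j = if i = j then d i else -M i j)
    (G : SimpleGraph (Fin n))
    (hG : ∀ i j, G.Adj i j ↔ i ≠ j ∧ 0 < M i j)
    (hconn : G.Connected) :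
    (∃ v : Fin n → ℝ, v ≠ 0 ∧ L *ᵥ v = (2 * 𝔡) • v) ↔
      ((∀ i, d i = 𝔡) ∧ ∃ f : Fin n → Bool, ∀ i j, M i j ≠ 0 → f i ≠ f j) := by
  have hLv := laplacian_mulVec_apply hMdiag hL
  constructor
  · rintro ⟨v, hv0, hv⟩
    have hle : ∀ i, d i ≤ 𝔡 := fun i => h𝔡.2 ⟨i, rfl⟩
    have hv' : ∀ i, d i * v i - ∑ j, M i j * v j = 2 * 𝔡 * v i := by
      intro i
      rw [← hLv, hv, Pi.smul_apply, smul_eq_mul]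
    have := hconn.nonempty
    obtain ⟨i₀, hi₀⟩ := Finite.exists_max fun i => |v i|
    have hm : 0 < |v i₀| := by
      obtain ⟨k, hk⟩ := Function.ne_iff.1 hv0
      exact (abs_pos.2 hk).trans_le (hi₀ k)
    have hstep : ∀ i, |v i| = |v i₀| → d i = 𝔡 ∧ ∀ j, M i j ≠ 0 → v j = -v i := by
      intro i hi
      exact eigenvector_at_max hMnonneg hd hle hv' i (abs_pos.1 (hi ▸ hm)) fun j => hi ▸ hi₀ j
    have hall : ∀ i, |v i| = |v i₀| := by
      intro i
      obtain ⟨w⟩ := hconn.preconnected i i₀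
      induction w with
      | nil => rfl
      | cons hadj _ ih =>
        have h := ih hi₀ hm hstep
        -- symmetry of `M` transports maximality from the far end of the edge back to the near one
        rw [(hstep _ h).2 _ (by rw [hMsymm]; exact ((hG _ _).1 hadj).2.ne'), abs_neg, h]
    refine ⟨fun i => (hstep i (hall i)).1, fun i => decide (0 < v i), fun i j hij => ?_⟩
    have hji := (hstep i (hall i)).2 j hij
    have hi : v i ≠ 0 := abs_pos.1 (hall i ▸ hm)
    rcases lt_or_gt_of_ne hi with h | h
    · simp [hji, h, h.le]
    · simp [hji, h, h.le]
  · rintro ⟨hreg, f, hf⟩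
    refine ⟨fun i => if f i then 1 else -1, fun h => ?_, ?_⟩
    · have h0 := congrFun h ⟨0, by omega⟩
      simp only [Pi.zero_apply] at h0
      split_ifs at h0 <;> norm_num at h0
    · ext i
      have hflip : ∀ j, M i j * (if f j then (1 : ℝ) else -1)
          = M i j * -(if f i then (1 : ℝ) else -1) := by
        intro j
        by_cases hij : M i j = 0
        · simp [hij]
        · have h := hf i j hij
          cases hi : f i <;> cases hj : f j <;> simp_all
      rw [hLv, Finset.sum_congr rfl fun j _ => hflip j, ← Finset.sum_mul, ← hd, hreg]
      simp only [Pi.smul_apply, smul_eq_mul]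
      ring
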